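/- Let X and Y be Banach spaces and suppose the pair (X, Y) has the BPBp for compact operators. Then: (a) for every σ-finite measure space (Ω, Σ, μ), the pair (X, L_∞(μ, Y)) has the BPBp for compact operators; and (b) for every compact Hausdorff topological space K, the pair (X, C(K, Y)) has the BPBp for compact operators. -/

import Mathlib

open MeasureTheory

noncomputable section

/-- A pair `(X, Y)` of normed spaces has the Bishop–Phelps–Bollobás property for compact
operators with the function `η`. -/
def BPBpCompactWith (𝕜 : Type*) [RCLike 𝕜] (X Y : Type*) [NormedAddCommGroup X]
    [NormedSpace 𝕜 X] [NormedAddCommGroup Y] [NormedSpace 𝕜 Y] (η : ℝ → ℝ) : Prop :=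
  ∀ ε : ℝ, 0 < ε → 0 < η ε ∧
    ∀ T : X →L[𝕜] Y, IsCompactOperator T → ‖T‖ = 1 →
      ∀ x₀ : X, ‖x₀‖ = 1 → 1 - η ε < ‖T x₀‖ →
        ∃ S : X →L[𝕜] Y, ∃ x₁ : X, IsCompactOperator S ∧ ‖S‖ = 1 ∧ ‖x₁‖ = 1 ∧
          ‖S x₁‖ = 1 ∧ ‖x₀ - x₁‖ < ε ∧ ‖S - T‖ < ε

/-- A pair `(X, Y)` has the Bishop–Phelps–Bollobás property for compact operators. -/
def BPBpCompact (𝕜 : Type*) [RCLike 𝕜] (X Y : Type*) [NormedAddCommGroup X]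
    [NormedSpace 𝕜 X] [NormedAddCommGroup Y] [NormedSpace 𝕜 Y] : Prop :=
  ∃ η : ℝ → ℝ, BPBpCompactWith 𝕜 X Y η

open scoped ENNReal

def LocApprox (𝕜 : Type*) [RCLike 𝕜] (Z Y : Type*) [NormedAddCommGroup Z]
    [NormedSpace 𝕜 Z] [NormedAddCommGroup Y] [NormedSpace 𝕜 Y] : Prop :=
  ∀ (F : Set Z), F.Finite → ∀ z₀ : Z, z₀ ≠ 0 → ∀ δ : ℝ, 0 < δ →
    ∃ (E : Z →ₗ[𝕜] Y) (P : Z →ₗ[𝕜] Z) (J : Y →ₗ[𝕜] Z),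
      (∀ z y, ‖P z + J y‖ ≤ max ‖z‖ ‖y‖) ∧ (∀ z, ‖E z‖ ≤ ‖z‖) ∧
      (∀ z y, E (P z + J y) = y) ∧ (∀ z ∈ F, ‖P z + J (E z) - z‖ ≤ δ) ∧
      ‖z₀‖ - δ ≤ ‖E z₀‖

theorem opNorm_le_of_forall_unit {𝕜 : Type*} [RCLike 𝕜] {X Z : Type*}
    [NormedAddCommGroup X] [NormedSpace 𝕜 X] [NormedAddCommGroup Z] [NormedSpace 𝕜 Z]
    (U : X →L[𝕜] Z) {e : ℝ} (he : 0 ≤ e) (h : ∀ x : X, ‖x‖ ≤ 1 → ‖U x‖ ≤ e) : ‖U‖ ≤ e := by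
  refine U.opNorm_le_bound he fun x => ?_
  rcases eq_or_ne x 0 with rfl | hx
  · simp
  have hp : 0 < ‖x‖ := norm_pos_iff.2 hx
  have h1 := h (((‖x‖⁻¹ : ℝ) : 𝕜) • x) (by
    rw [norm_smul, RCLike.norm_ofReal, abs_of_pos (inv_pos.2 hp), inv_mul_cancel₀ hp.ne'])
  rw [map_smul, norm_smul, RCLike.norm_ofReal, abs_of_pos (inv_pos.2 hp),
    inv_mul_le_iff₀ hp] at h1
  linarith

theorem LocApprox.bpbp {𝕜 : Type*} [RCLike 𝕜] {X Y Z : Type*}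
    [NormedAddCommGroup X] [NormedSpace 𝕜 X]
    [NormedAddCommGroup Y] [NormedSpace 𝕜 Y]
    [NormedAddCommGroup Z] [NormedSpace 𝕜 Z]
    (hZ : LocApprox 𝕜 Z Y) (h : BPBpCompact 𝕜 X Y) : BPBpCompact 𝕜 X Z := by
  obtain ⟨η, hη⟩ := h
  refine ⟨fun ε => min (η (ε / 2) / 2) (min (1 / 4) (ε / 8)), fun ε hε => ?_⟩
  obtain ⟨hη0, H⟩ := hη (ε / 2) (by positivity)
  beta_reduce
  set e := min (η (ε / 2) / 2) (min (1 / 4) (ε / 8)) with he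
  have he0 : 0 < e := by simp only [he, lt_min_iff]; refine ⟨by positivity, by norm_num, by positivity⟩
  have he1 : e ≤ η (ε / 2) / 2 := min_le_left _ _
  have he2 : e ≤ 1 / 4 := (min_le_right _ _).trans (min_le_left _ _)
  have he3 : e ≤ ε / 8 := (min_le_right _ _).trans (min_le_right _ _)
  clear_value e
  refine ⟨he0, fun T hT hT1 x₀ hx₀ hTx => ?_⟩
  -- finite net
  have hcomp := (hT.isCompact_closure_image_closedBall (f := (T : X →ₗ[𝕜] Z)) 1)
  have htb := hcomp.totallyBounded
  obtain ⟨F, hF, hcov⟩ := Metric.totallyBounded_iff.1 htb (e / 4) (by positivity)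
  have hz0 : T x₀ ≠ 0 := by
    intro h0; rw [h0, norm_zero] at hTx; linarith
  obtain ⟨E, P, J, hPJ, hE, hEPJ, happ, hEz⟩ := hZ F hF (T x₀) hz0 (e / 4) (by positivity)
  have hP (z) : ‖P z‖ ≤ 1 * ‖z‖ := by simpa using hPJ z 0
  have hJ (y) : ‖J y‖ ≤ 1 * ‖y‖ := by simpa using hPJ 0 y
  have hball : ∀ x : X, ‖x‖ ≤ 1 → ‖P (T x) + J (E (T x)) - T x‖ ≤ e := by
    intro x hx
    have : T x ∈ closure ((T : X →ₗ[𝕜] Z) '' Metric.closedBall 0 1) :=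
      subset_closure ⟨x, by simpa using hx, rfl⟩
    obtain ⟨f, hf, hxf⟩ := Set.mem_iUnion₂.1 (hcov this)
    rw [Metric.mem_ball, dist_eq_norm] at hxf
    have h1 := happ f hf
    have h2 := hPJ (T x - f) (E (T x - f))
    rw [max_eq_left (hE _)] at h2
    have : P (T x) + J (E (T x)) - T x =
      (P (T x - f) + J (E (T x - f))) + (P f + J (E f) - f) - (T x - f) := by
      simp only [map_sub]; abel
    rw [this]
    have h3 := norm_sub_le ((P (T x - f) + J (E (T x - f))) + (P f + J (E f) - f)) (T x - f)
    have h4 := norm_add_le (P (T x - f) + J (E (T x - f))) (P f + J (E f) - f)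
    linarith
  let E' : Z →L[𝕜] Y := E.mkContinuous 1 (by simpa using hE)
  let P' : Z →L[𝕜] Z := P.mkContinuous 1 hP
  let J' : Y →L[𝕜] Z := J.mkContinuous 1 hJ
  let R₀ : X →L[𝕜] Y := E'.comp T
  have hR₀c : IsCompactOperator R₀ := hT.clm_comp E'
  have hTle : ∀ x, ‖T x‖ ≤ ‖x‖ := fun x => by simpa [hT1] using T.le_opNorm x
  have hR₀1 : ‖R₀‖ ≤ 1 := R₀.opNorm_le_bound zero_le_one fun x => by
    rw [one_mul]; exact (hE (T x)).trans (hTle x)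
  have hR₀x : 1 - 2 * e < ‖R₀ x₀‖ := by
    have : R₀ x₀ = E (T x₀) := rfl
    rw [this]; linarith
  have hR₀2 : ‖R₀ x₀‖ ≤ ‖R₀‖ := by simpa [hx₀] using R₀.le_opNorm x₀
  have hpos : 0 < ‖R₀‖ := by linarith
  let c : 𝕜 := ((‖R₀‖⁻¹ : ℝ) : 𝕜)
  have hc : ‖c‖ = ‖R₀‖⁻¹ := by simp [c]
  let R : X →L[𝕜] Y := c • R₀
  have hRc : IsCompactOperator R := hR₀c.smul c
  have hR1 : ‖R‖ = 1 := by
    simp only [R, norm_smul, hc]; exact inv_mul_cancel₀ hpos.ne'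
  have hRR₀ : ‖R - R₀‖ ≤ 2 * e := by
    have : R - R₀ = ((‖R₀‖⁻¹ - 1 : ℝ) : 𝕜) • R₀ := by
      simp [R, c, sub_smul]
    rw [this, norm_smul, RCLike.norm_ofReal, abs_of_nonneg, sub_mul, inv_mul_cancel₀ hpos.ne']
    · linarith
    · have := (one_le_inv₀ hpos).2 hR₀1; linarith
  have hRx : 1 - η (ε / 2) < ‖R x₀‖ := by
    have : ‖R x₀‖ = ‖R₀‖⁻¹ * ‖R₀ x₀‖ := by simp [R, norm_smul, hc]
    rw [this]
    have h1 := (one_le_inv₀ hpos).2 hR₀1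
    have := mul_le_mul_of_nonneg_right h1 (norm_nonneg (R₀ x₀))
    linarith
  obtain ⟨S₀, x₁, hS₀c, hS₀1, hx₁, hSx, hxx, hSR⟩ := H R hRc hR1 x₀ hx₀ hRx
  let S : X →L[𝕜] Z := P'.comp T + J'.comp S₀
  have hS (x) : S x = P (T x) + J (S₀ x) := rfl
  have hSle : ‖S‖ ≤ 1 := S.opNorm_le_bound zero_le_one fun x => by
    rw [one_mul, hS]
    refine (hPJ _ _).trans (max_le (hTle x) ?_)
    simpa [hS₀1] using S₀.le_opNorm x
  have hSx1 : 1 ≤ ‖S x₁‖ := by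
    have := hE (S x₁)
    rwa [hS, hEPJ, hSx] at this
  have hSx2 : ‖S x₁‖ ≤ ‖S‖ := by simpa [hx₁] using S.le_opNorm x₁
  refine ⟨S, x₁, (hT.clm_comp P').add (hS₀c.clm_comp J'), by linarith, hx₁, by linarith,
    by linarith, ?_⟩
  have hdecomp : S - T = (P'.comp T + (J'.comp E').comp T - T) + J'.comp (S₀ - R₀) := by
    ext x
    simp only [S, R₀, _root_.sub_apply, _root_.add_apply,
      ContinuousLinearMap.comp_apply, map_sub]
    abel
  have hA : ‖P'.comp T + (J'.comp E').comp T - T‖ ≤ e :=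
    opNorm_le_of_forall_unit _ he0.le hball
  have hB : ‖J'.comp (S₀ - R₀)‖ ≤ ‖S₀ - R₀‖ :=
    ContinuousLinearMap.opNorm_le_bound _ (norm_nonneg _) fun x =>
      (hJ _).trans (by rw [one_mul]; exact (S₀ - R₀).le_opNorm x)
  have hC : ‖S₀ - R₀‖ ≤ ‖S₀ - R‖ + ‖R - R₀‖ := norm_sub_le_norm_sub_add_norm_sub _ _ _
  rw [hdecomp]
  refine (norm_add_le _ _).trans_lt ?_
  linarith

theorem locApprox_CK {𝕜 : Type*} [RCLike 𝕜] {Y : Type*}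
    [NormedAddCommGroup Y] [NormedSpace 𝕜 Y]
    (K : Type*) [TopologicalSpace K] [CompactSpace K] [T2Space K] :
    LocApprox 𝕜 C(K, Y) Y := by
  intro F hF z₀ hz₀ δ hδ
  have hne : Nonempty K := by
    by_contra hK
    rw [not_nonempty_iff] at hK
    exact hz₀ (ContinuousMap.ext fun t => isEmptyElim t)
  obtain ⟨t₀, -, ht₀⟩ := isCompact_univ.exists_isMaxOn (Set.univ_nonempty (α := K))
    (f := fun t => ‖z₀ t‖) (by fun_prop)
  have ht₀' : ‖z₀‖ ≤ ‖z₀ t₀‖ := (ContinuousMap.norm_le _ (norm_nonneg _)).2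
    fun t => ht₀ (Set.mem_univ t)
  let U : Set K := ⋂ f ∈ F, {t | ‖f t - f t₀‖ < δ}
  have hU : IsOpen U := hF.isOpen_biInter fun f _ =>
    isOpen_lt (by fun_prop) continuous_const
  have htU : t₀ ∈ U := by simp [U, hδ]
  obtain ⟨φ, hφ0, hφ1, hφ⟩ := exists_continuous_zero_one_of_isClosed (s := Uᶜ) (t := {t₀})
    hU.isClosed_compl isClosed_singleton (by simpa using htU)
  have hφt : φ t₀ = 1 := hφ1 rfl
  let ψ : C(K, 𝕜) := ⟨fun t => ((φ t : ℝ) : 𝕜), by fun_prop⟩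
  have hψ (t) : ψ t = ((φ t : ℝ) : 𝕜) := rfl
  refine ⟨{ toFun := fun z => z t₀, map_add' := fun _ _ => rfl, map_smul' := fun _ _ => rfl },
    { toFun := fun z => ⟨fun t => (1 - ψ t) • z t, by fun_prop⟩,
      map_add' := fun a b => by ext t; simp
      map_smul' := fun a b => by ext t; simp [smul_comm a] },
    { toFun := fun y => ⟨fun t => ψ t • y, by fun_prop⟩,
      map_add' := fun a b => by ext t; simp
      map_smul' := fun a b => by ext t; simp [smul_comm a] }, ?_, ?_, ?_, ?_, ?_⟩
  · intro z y
    refine (ContinuousMap.norm_le _ (le_max_of_le_left (norm_nonneg _))).2 fun t => ?_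
    have h1 : ‖(1 - ψ t) • z t‖ = (1 - φ t) * ‖z t‖ := by
      rw [norm_smul, hψ, ← RCLike.ofReal_one, ← RCLike.ofReal_sub, RCLike.norm_ofReal,
        abs_of_nonneg (by linarith [(hφ t).2])]
    have h2 : ‖ψ t • y‖ = φ t * ‖y‖ := by
      rw [norm_smul, hψ, RCLike.norm_ofReal, abs_of_nonneg (hφ t).1]
    refine (norm_add_le ((1 - ψ t) • z t) (ψ t • y)).trans ?_
    rw [h1, h2]
    have h3 : ‖z t‖ ≤ max ‖z‖ ‖y‖ := (z.norm_coe_le_norm t).trans (le_max_left _ _)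
    have h4 : ‖y‖ ≤ max ‖z‖ ‖y‖ := le_max_right _ _
    have h5 := mul_le_mul_of_nonneg_left h3 (a := 1 - φ t) (by linarith [(hφ t).2])
    have h6 := mul_le_mul_of_nonneg_left h4 (hφ t).1
    linarith
  · intro z; exact z.norm_coe_le_norm t₀
  · intro z y; simp [hψ, hφt]
  · intro z hz
    refine (ContinuousMap.norm_le _ hδ.le).2 fun t => ?_
    have : (1 - ψ t) • z t + ψ t • z t₀ - z t = ψ t • (z t₀ - z t) := by
      rw [sub_smul, smul_sub, one_smul]; abel
    change ‖(1 - ψ t) • z t + ψ t • z t₀ - z t‖ ≤ δ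
    rw [this, norm_smul, hψ, RCLike.norm_ofReal, abs_of_nonneg (hφ t).1]
    by_cases ht : t ∈ U
    · have h1 : ‖z t - z t₀‖ < δ := Set.mem_iInter₂.1 ht z hz
      rw [norm_sub_rev] at h1
      have := mul_le_mul_of_nonneg_right (hφ t).2 (norm_nonneg (z t₀ - z t))
      linarith
    · have : φ t = 0 := hφ0 ht
      rw [this, zero_mul]; exact hδ.le
  · change ‖z₀‖ - δ ≤ ‖z₀ t₀‖
    linarith

theorem Linfty_norm_le {Y : Type*} [NormedAddCommGroup Y] {Ω : Type*} [MeasurableSpace Ω]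
    {μ : MeasureTheory.Measure Ω} (f : Lp Y ⊤ μ) {C : ℝ} (hC : 0 ≤ C)
    (h : ∀ᵐ t ∂μ, ‖f t‖ ≤ C) : ‖f‖ ≤ C := by
  rw [Lp.norm_def, eLpNorm_exponent_top]
  exact ENNReal.toReal_le_of_le_ofReal hC (eLpNormEssSup_le_of_ae_bound h)

theorem Linfty_ae_le {Y : Type*} [NormedAddCommGroup Y] {Ω : Type*} [MeasurableSpace Ω]
    {μ : MeasureTheory.Measure Ω} (f : Lp Y ⊤ μ) : ∀ᵐ t ∂μ, ‖f t‖ ≤ ‖f‖ := by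
  have hfin := Lp.eLpNorm_ne_top f
  rw [Lp.norm_def]
  rw [eLpNorm_exponent_top] at *
  filter_upwards [ae_le_eLpNormEssSup (f := f) (μ := μ)] with t ht
  have := ENNReal.toReal_mono hfin ht
  simpa using this

theorem exists_small_osc {Y : Type*} [NormedAddCommGroup Y] {Ω : Type*} [MeasurableSpace Ω]
    {μ : MeasureTheory.Measure Ω} {δ : ℝ} (hδ : 0 < δ) (F : Set (Lp Y ⊤ μ)) (hF : F.Finite) :
    ∀ A : Set Ω, MeasurableSet A → 0 < μ A → ∃ B ⊆ A, MeasurableSet B ∧ 0 < μ B ∧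
      ∀ f ∈ F, ∃ y : Y, ∀ t ∈ B, ‖f t - y‖ < δ := by
  induction F, hF using Set.Finite.induction_on with
  | empty => exact fun A hA h0 => ⟨A, subset_rfl, hA, h0, by simp⟩
  | @insert g F _ _ ih =>
    intro A hA h0
    have hg := Lp.stronglyMeasurable g
    obtain ⟨c, hc, hcd⟩ := hg.isSeparable_range
    have := hc.to_subtype
    have hcov : A ⊆ ⋃ y : c, (A ∩ {t | ‖g t - y‖ < δ}) := by
      intro t ht
      obtain ⟨y, hy, hty⟩ := Metric.mem_closure_iff.1 (hcd ⟨t, rfl⟩) δ hδ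
      exact Set.mem_iUnion.2 ⟨⟨y, hy⟩, ht, by simpa [dist_eq_norm] using hty⟩
    obtain ⟨y, hy⟩ := exists_measure_pos_of_not_measure_iUnion_null
      (h0.trans_le (measure_mono hcov)).ne'
    have hm : MeasurableSet {t | ‖g t - y‖ < δ} :=
      (hg.sub stronglyMeasurable_const).norm.measurable measurableSet_Iio
    obtain ⟨B, hBA, hB, hB0, h⟩ := ih _ (hA.inter hm) hy
    refine ⟨B, hBA.trans Set.inter_subset_left, hB, hB0, ?_⟩
    intro f hf
    rcases hf with rfl | hf
    · exact ⟨y, fun t ht => (hBA ht).2⟩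
    · exact h f hf

theorem locApprox_Linfty {𝕜 : Type*} [RCLike 𝕜] {Y : Type*}
    [NormedAddCommGroup Y] [NormedSpace 𝕜 Y] [CompleteSpace Y]
    {Ω : Type*} [MeasurableSpace Ω] (μ : MeasureTheory.Measure Ω)
    [MeasureTheory.SigmaFinite μ] :
    LocApprox 𝕜 (Lp Y ⊤ μ) Y := by
  intro F hF z₀ hz₀ δ' hδ'
  obtain ⟨δ, hδ, hδδ⟩ : ∃ δ : ℝ, 0 < δ ∧ 3 * δ = δ' := ⟨δ' / 3, by positivity, by ring⟩
  let _ : NormedSpace ℝ Y := NormedSpace.restrictScalars ℝ 𝕜 Y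
  have : IsScalarTower ℝ 𝕜 Y := RestrictScalars.isScalarTower ℝ 𝕜 Y
  have hz₀p : 0 < ‖z₀‖ := norm_pos_iff.2 hz₀
  obtain ⟨A, hA, hA0, hAfin, hAz⟩ : ∃ A, MeasurableSet A ∧ 0 < μ A ∧ μ A < ∞ ∧
      ∀ t ∈ A, ‖z₀‖ - δ < ‖z₀ t‖ := by
    have hm : MeasurableSet {t | ‖z₀‖ - δ < ‖z₀ t‖} :=
      (Lp.stronglyMeasurable z₀).norm.measurable measurableSet_Ioi
    have hpos : 0 < μ {t | ‖z₀‖ - δ < ‖z₀ t‖} := by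
      by_contra hcon
      have h0 : μ {t | ‖z₀‖ - δ < ‖z₀ t‖} = 0 := by simpa using hcon
      have hae : ∀ᵐ t ∂μ, ‖z₀ t‖ ≤ ‖z₀‖ - δ := by
        rw [ae_iff]; simpa using h0
      have hae' : ∀ᵐ t ∂μ, ‖z₀ t‖ ≤ max 0 (‖z₀‖ - δ) :=
        hae.mono fun t ht => ht.trans (le_max_right _ _)
      have := Linfty_norm_le z₀ (le_max_left _ _) hae'
      rcases le_max_iff.1 this with h | h <;> linarith
    obtain ⟨A, hA, hAs, hA0, hAf⟩ := Measure.exists_subset_measure_lt_top hm hpos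
    exact ⟨A, hA, hA0, hAf, fun t ht => hAs ht⟩
  obtain ⟨B, hBA, hB, hB0, hosc⟩ := exists_small_osc hδ (insert z₀ F) (hF.insert z₀) A hA hA0
  have hBfin : μ B < ∞ := (measure_mono hBA).trans_lt hAfin
  have hBz : ∀ t ∈ B, ‖z₀‖ - δ < ‖z₀ t‖ := fun t ht => hAz t (hBA ht)
  clear hAz hA0 hAfin hBA hA
  have : IsFiniteMeasure (μ.restrict B) := ⟨by simpa using hBfin⟩
  have hBr : 0 < μ.real B := ENNReal.toReal_pos hB0.ne' hBfin.ne
  have hint (z : Lp Y ⊤ μ) : IntegrableOn z B μ :=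
    ((Lp.memLp z).restrict B).integrable le_top
  let E : Lp Y ⊤ μ →ₗ[𝕜] Y :=
    { toFun := fun z => (μ.real B)⁻¹ • ∫ t in B, z t ∂μ
      map_add' := fun a b => by
        rw [← smul_add, ← integral_add (hint a) (hint b)]
        congr 1
        exact integral_congr_ae (ae_restrict_of_ae (Lp.coeFn_add a b))
      map_smul' := fun c a => by
        rw [RingHom.id_apply, smul_comm c, ← integral_smul c]
        congr 1
        exact integral_congr_ae (ae_restrict_of_ae (Lp.coeFn_smul c a)) }
  have hEdef (z) : E z = (μ.real B)⁻¹ • ∫ t in B, z t ∂μ := rfl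
  have hEclose (z : Lp Y ⊤ μ) (y : Y) (C : ℝ) (h : ∀ᵐ t ∂μ, t ∈ B → ‖z t - y‖ ≤ C) :
      ‖E z - y‖ ≤ C := by
    have h1 : E z - y = (μ.real B)⁻¹ • ∫ t in B, (z t - y) ∂μ := by
      rw [integral_sub (hint z) (integrable_const y), smul_sub, setIntegral_const, smul_smul,
        inv_mul_cancel₀ hBr.ne', one_smul, hEdef]
    have h2 := norm_setIntegral_le_of_norm_le_const_ae' hBfin h
    rw [h1, norm_smul, norm_inv, Real.norm_of_nonneg hBr.le, inv_mul_le_iff₀ hBr]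
    linarith
  have hPm (z : Lp Y ⊤ μ) : MemLp (Bᶜ.indicator z) ⊤ μ := (Lp.memLp z).indicator hB.compl
  have hJm (y : Y) : MemLp (B.indicator fun _ => y) ⊤ μ := (memLp_top_const y).indicator hB
  let P : Lp Y ⊤ μ →ₗ[𝕜] Lp Y ⊤ μ :=
    { toFun := fun z => (hPm z).toLp
      map_add' := fun a b => by
        apply Lp.ext
        filter_upwards [(hPm (a + b)).coeFn_toLp, (hPm a).coeFn_toLp, (hPm b).coeFn_toLp,
          Lp.coeFn_add (hPm a).toLp (hPm b).toLp, Lp.coeFn_add a b] with t h1 h2 h3 h4 h5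
        rw [h1, h4, Pi.add_apply, h2, h3]
        by_cases ht : t ∈ B
        · simp [ht]
        · rw [Set.indicator_of_mem ht, Set.indicator_of_mem ht, Set.indicator_of_mem ht, h5,
            Pi.add_apply]
      map_smul' := fun c a => by
        apply Lp.ext
        filter_upwards [(hPm (c • a)).coeFn_toLp, (hPm a).coeFn_toLp,
          Lp.coeFn_smul c (hPm a).toLp, Lp.coeFn_smul c a] with t h1 h2 h4 h5
        rw [h1, RingHom.id_apply, h4, Pi.smul_apply, h2]
        by_cases ht : t ∈ B
        · simp [ht]
        · rw [Set.indicator_of_mem ht, Set.indicator_of_mem ht, h5, Pi.smul_apply] }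
  let J : Y →ₗ[𝕜] Lp Y ⊤ μ :=
    { toFun := fun y => (hJm y).toLp
      map_add' := fun a b => by
        apply Lp.ext
        filter_upwards [(hJm (a + b)).coeFn_toLp, (hJm a).coeFn_toLp, (hJm b).coeFn_toLp,
          Lp.coeFn_add (hJm a).toLp (hJm b).toLp] with t h1 h2 h3 h4
        rw [h1, h4, Pi.add_apply, h2, h3]
        by_cases ht : t ∈ B <;> simp [ht]
      map_smul' := fun c a => by
        apply Lp.ext
        filter_upwards [(hJm (c • a)).coeFn_toLp, (hJm a).coeFn_toLp,
          Lp.coeFn_smul c (hJm a).toLp] with t h1 h2 h4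
        rw [h1, RingHom.id_apply, h4, Pi.smul_apply, h2]
        by_cases ht : t ∈ B <;> simp [ht] }
  have hPJ (z y) : ∀ᵐ t ∂μ, (t ∈ B → (P z + J y) t = y) ∧ (t ∉ B → (P z + J y) t = z t) := by
    filter_upwards [(hPm z).coeFn_toLp, (hJm y).coeFn_toLp, Lp.coeFn_add (P z) (J y)]
      with t h1 h2 h3
    have h1' : (P z) t = Bᶜ.indicator z t := h1
    have h2' : (J y) t = B.indicator (fun _ => y) t := h2
    rw [h3, Pi.add_apply, h1', h2']
    by_cases ht : t ∈ B <;> simp [ht]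
  have hEosc : ∀ z ∈ insert z₀ F, ∀ t ∈ B, ‖E z - z t‖ ≤ 2 * δ := by
    intro z hz t ht
    obtain ⟨y, hy⟩ := hosc z hz
    have h1 := hEclose z y δ (Filter.Eventually.of_forall fun t ht => (hy t ht).le)
    have h2 := hy t ht
    rw [norm_sub_rev] at h2
    have := norm_sub_le_norm_sub_add_norm_sub (E z) y (z t)
    linarith
  refine ⟨E, P, J, ?_, ?_, ?_, ?_, ?_⟩
  · intro z y
    refine Linfty_norm_le _ (le_max_of_le_left (norm_nonneg _)) ?_
    filter_upwards [hPJ z y, Linfty_ae_le z] with t ht hz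
    by_cases htB : t ∈ B
    · rw [ht.1 htB]; exact le_max_right _ _
    · rw [ht.2 htB]; exact hz.trans (le_max_left _ _)
  · intro z
    have := hEclose z 0 ‖z‖ ((Linfty_ae_le z).mono fun t ht _ => by simpa using ht)
    simpa using this
  · intro z y
    have := hEclose (P z + J y) y 0 ((hPJ z y).mono fun t ht hB => by rw [ht.1 hB]; simp)
    exact sub_eq_zero.1 (norm_le_zero_iff.1 this)
  · intro z hz
    refine Linfty_norm_le _ hδ'.le ?_
    filter_upwards [hPJ z (E z), Lp.coeFn_sub (P z + J (E z)) z] with t ht hs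
    rw [hs, Pi.sub_apply]
    by_cases htB : t ∈ B
    · rw [ht.1 htB]
      have := hEosc z (Set.mem_insert_of_mem _ hz) t htB
      linarith
    · rw [ht.2 htB, sub_self, norm_zero]; exact hδ'.le
  · obtain ⟨t, ht⟩ := nonempty_of_measure_ne_zero hB0.ne'
    have h1 := hEosc z₀ (Set.mem_insert _ _) t ht
    have h2 := hBz t ht
    have h3 := norm_le_norm_add_norm_sub' (z₀ t) (E z₀)
    rw [norm_sub_rev] at h3
    linarith


/-- Theorem 3.14 (b) and (c): the BPBp for compact operators passes from (X, Y) to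
(X, L_∞(μ, Y)) for σ-finite μ and to (X, C(K, Y)) for K compact Hausdorff. -/
theorem bpbp_compact_Linfty_and_CK {𝕜 : Type*} [RCLike 𝕜] {X Y : Type*}
    [NormedAddCommGroup X] [NormedSpace 𝕜 X] [CompleteSpace X]
    [NormedAddCommGroup Y] [NormedSpace 𝕜 Y] [CompleteSpace Y]
    (h : BPBpCompact 𝕜 X Y)
    {Ω : Type*} [MeasurableSpace Ω] (μ : MeasureTheory.Measure Ω)
    [MeasureTheory.SigmaFinite μ]
    (K : Type*) [TopologicalSpace K] [CompactSpace K] [T2Space K] :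
    BPBpCompact 𝕜 X (MeasureTheory.Lp Y ⊤ μ) ∧
    BPBpCompact 𝕜 X C(K, Y) := by
  exact ⟨(locApprox_Linfty μ).bpbp h, (locApprox_CK K).bpbp h⟩
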